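/- arXiv:2602.10795 — 3 statements merged into one kernel-verified Lean document; each statement's English description precedes it below -/
import Mathlib

section
/- Poincaré–Miranda theorem: Let f₁, ..., f_d : [-1,1]^d → ℝ be continuous functions such that for each i, f_i(x) ≤ 0 whenever x_i = -1 and f_i(x) ≥ 0 whenever x_i = 1. Then there exists a point x* ∈ [-1,1]^d with f_i(x*) = 0 for all i ∈ [d]. -/
/-!
# The Poincaré–Miranda theorem

The combinatorial core is a mod 2 degree computation. For `g₀, …, g_{d-1} : ℤᵈ → ZMod 2`, the
cup product `δg₀ ⌣ ⋯ ⌣ δg_{d-1}` is summed over all simplices of the Freudenthal triangulation of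
a grid. Changing one `gᵢ` away from its two faces changes the integrand by a coboundary, so the
sum can be evaluated by replacing every `gᵢ` with the indicator function of `1 ≤ xᵢ`.
-/

namespace PoincareMiranda

open Finset Function

/-- The `m`-th vertex of the Freudenthal simplex with base point `v`, where the coordinate `c`
is increased at step `π c`. -/
def vertex {d : ℕ} (π : Equiv.Perm (Fin d)) (v : Fin d → ℤ) (m : ℕ) : Fin d → ℤ :=
  fun c => v c + if (π c : ℕ) < m then 1 else 0

/-- The increasing enumeration of `ℕ \ {k}`. -/
def skip (k m : ℕ) : ℕ := if m < k then m else m + 1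

lemma skip_ne (k m : ℕ) : skip k m ≠ k := by
  unfold skip; split_ifs <;> omega

/-- The cup product `δg₀ ⌣ ⋯ ⌣ δg_{d-1}` evaluated on a simplex with vertices `q`. -/
def cupDelta {X : Type*} (g : ℕ → X → ZMod 2) (d : ℕ) (q : ℕ → X) : ZMod 2 :=
  ∏ j ∈ range d, (g j (q (j + 1)) + g j (q j))

/-- The cup product `δg₀ ⌣ ⋯ ⌣ gᵢ ⌣ ⋯ ⌣ δg_{d-1}` evaluated on a simplex with vertices `q`. -/
def primitive {X : Type*} (g : ℕ → X → ZMod 2) (i d : ℕ) (q : ℕ → X) : ZMod 2 :=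
  ∏ j ∈ range d, if j < i then g j (q (j + 1)) + g j (q j)
    else if j = i then g j (q j) else g j (q j) + g j (q (j - 1))

lemma primitive_congr {X : Type*} (g : ℕ → X → ZMod 2) {i d : ℕ} (hi : i < d) {q q' : ℕ → X}
    (h : ∀ m < d, q m = q' m) : primitive g i d q = primitive g i d q' := by
  refine prod_congr rfl fun j hj => ?_
  have hj := mem_range.1 hj
  split_ifs
  · rw [h _ (by omega), h _ hj]
  · rw [h _ hj]
  · rw [h _ hj, h _ (by omega)]

lemma sum_cupDelta_skip {X : Type*} (g : ℕ → X → ZMod 2) (q : ℕ → X) (i : ℕ) :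
    ∑ k ∈ range (i + 1), cupDelta g i (q ∘ skip k) = cupDelta g i q := by
  induction i with
  | zero => simp [cupDelta]
  | succ i ih =>
    have h₁ : ∀ k ∈ range (i + 1), cupDelta g (i + 1) (q ∘ skip k) =
        cupDelta g i (q ∘ skip k) * (g i (q (i + 2)) + g i (q (i + 1))) := by
      intro k hk
      have hk := mem_range.1 hk
      simp [cupDelta, prod_range_succ, skip, show ¬ i + 1 < k by omega, show ¬ i < k by omega]
    have h₂ : cupDelta g (i + 1) (q ∘ skip (i + 1)) =
        cupDelta g i q * (g i (q (i + 2)) + g i (q i)) := by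
      simp only [cupDelta, prod_range_succ, comp_apply]
      congr 1
      · refine prod_congr rfl fun j hj => ?_
        have hj := mem_range.1 hj
        simp [skip, show j < i by omega, show j < i + 1 by omega]
      · simp [skip]
    have h₃ : cupDelta g (i + 1) q = cupDelta g i q * (g i (q (i + 1)) + g i (q i)) := by
      simp [cupDelta, prod_range_succ]
    rw [sum_range_succ, sum_congr rfl h₁, ← sum_mul, ih, h₂, h₃]
    linear_combination cupDelta g i q * CharTwo.add_self_eq_zero (g i (q (i + 2)))

/-- The Leibniz rule: `cupDelta` is the coboundary of `primitive`. -/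
lemma sum_primitive_skip {X : Type*} (g : ℕ → X → ZMod 2) (q : ℕ → X) {i d : ℕ} (hi : i + 1 ≤ d) :
    ∑ k ∈ range (d + 1), primitive g i d (q ∘ skip k) = cupDelta g d q := by
  induction d, hi using Nat.le_induction with
  | base =>
    have h : ∀ q' : ℕ → X, primitive g i (i + 1) q' = cupDelta g i q' * g i (q' i) := by
      intro q'
      simp only [primitive, cupDelta, prod_range_succ]
      congr 1
      · refine prod_congr rfl fun j hj => ?_
        simp [mem_range.1 hj]
      · simp
    have h₁ : ∀ k ∈ range (i + 1), primitive g i (i + 1) (q ∘ skip k) =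
        cupDelta g i (q ∘ skip k) * g i (q (i + 1)) := by
      intro k hk
      have hk := mem_range.1 hk
      simp [h, skip, show ¬ i < k by omega]
    have h₂ : cupDelta g i (q ∘ skip (i + 1)) = cupDelta g i q := by
      refine prod_congr rfl fun j hj => ?_
      have hj := mem_range.1 hj
      simp [skip, show j < i by omega, show j < i + 1 by omega]
    have h₃ : cupDelta g (i + 1) q = cupDelta g i q * (g i (q (i + 1)) + g i (q i)) := by
      simp [cupDelta, prod_range_succ]
    rw [sum_range_succ, sum_congr rfl h₁, ← sum_mul, sum_cupDelta_skip, h, h₂, h₃]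
    simp [skip, mul_add]
  | succ d hi ih =>
    have h : ∀ q' : ℕ → X, primitive g i (d + 1) q' =
        primitive g i d q' * (g d (q' d) + g d (q' (d - 1))) := by
      intro q'
      simp only [primitive, prod_range_succ]
      simp [show ¬ d < i by omega, show d ≠ i by omega]
    have h₀ : ∀ k, d ≤ k → primitive g i d (q ∘ skip k) = primitive g i d q := fun k hk =>
      primitive_congr g hi fun m hm => by simp [skip, show m < k by omega]
    have h₁ : ∀ k ∈ range d, primitive g i (d + 1) (q ∘ skip k) =
        primitive g i d (q ∘ skip k) * (g d (q (d + 1)) + g d (q d)) := by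
      intro k hk
      have hk := mem_range.1 hk
      simp [h, skip, show ¬ d < k by omega, show ¬ d - 1 < k by omega,
        show d - 1 + 1 = d by omega]
    have h₃ : cupDelta g (d + 1) q = cupDelta g d q * (g d (q (d + 1)) + g d (q d)) := by
      simp [cupDelta, prod_range_succ]
    rw [sum_range_succ, h₀ d le_rfl] at ih
    rw [sum_range_succ, sum_range_succ, sum_congr rfl h₁, ← sum_mul, h, h, h₀ d le_rfl,
      h₀ (d + 1) (by omega), h₃, ← ih]
    simp only [comp_apply, skip, lt_irrefl, if_false, show d - 1 < d by omega, if_true,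
      show d < d + 1 by omega, show d - 1 < d + 1 by omega]
    linear_combination primitive g i d q * (CharTwo.add_self_eq_zero (g d (q (d - 1))))

variable {d : ℕ}

/-- Two simplices that differ only in an interior vertex cancel. -/
lemma sum_perm_eq_zero (F : (ℕ → Fin d → ℤ) → ZMod 2) {k : ℕ} (hk : 0 < k) (hkd : k < d)
    (hF : ∀ q q', (∀ m ≠ k, q m = q' m) → F q = F q') (v : Fin d → ℤ) :
    ∑ π : Equiv.Perm (Fin d), F (vertex π v) = 0 := by
  let a : Fin d := ⟨k - 1, by omega⟩
  let b : Fin d := ⟨k, hkd⟩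
  have hab : a ≠ b := by simp only [a, b, ne_eq, Fin.mk.injEq]; omega
  refine sum_involution (fun π _ => Equiv.swap a b * π) ?_ ?_ (fun _ _ => mem_univ _) ?_
  · intro π _
    rw [hF (vertex π v) (vertex (Equiv.swap a b * π) v), CharTwo.add_self_eq_zero]
    intro m hm
    funext c
    have key : ((π c : ℕ) < m) ↔ ((Equiv.swap a b (π c) : Fin d) : ℕ) < m := by
      rw [Equiv.swap_apply_def]
      split_ifs with h₁ h₂
      · rw [h₁]; simp only [a, b]; omega
      · rw [h₂]; simp only [a, b]; omega
      · rfl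
    simp only [vertex, Equiv.Perm.mul_apply]
    exact congrArg _ (if_congr key rfl rfl)
  · intro π _ _ h
    have := mul_eq_right.1 h
    exact hab (by simpa using congrArg (fun σ => σ b) this)
  · intro π _
    simp [← mul_assoc]

/-- The simplices of the grid `[0, n]ᵈ`. -/
noncomputable def simplices (d : ℕ) (n : ℤ) : Finset (Equiv.Perm (Fin d) × (Fin d → ℤ)) :=
  univ ×ˢ Fintype.piFinset fun _ => Ico 0 n

lemma vertex_eq_vertex_succ (π : Equiv.Perm (Fin (d + 1))) (v : Fin (d + 1) → ℤ) {m : ℕ}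
    (hm : m < d + 1) :
    vertex π v m = vertex (finRotate (d + 1) * π)
      (v - fun c => if π c = Fin.last d then 1 else 0) (m + 1) := by
  funext c
  by_cases h : π c = Fin.last d
  · simp [vertex, h]; omega
  · have : (finRotate (d + 1) (π c) : ℕ) = π c + 1 := by
      rw [coe_finRotate, if_neg h]
    simp only [vertex, Equiv.Perm.mul_apply, this, Pi.sub_apply, h, if_false, sub_zero,
      Nat.add_lt_add_iff_right]

/-- The two families of extremal faces match up, because translation invariance identifies
them and everything outside of the grid contributes zero. -/
lemma sum_primitive_first_eq_last {n : ℤ} {g : ℕ → (Fin d → ℤ) → ZMod 2} {e : ℕ → ZMod 2}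
    (h₀ : ∀ (j : Fin d) x, x j ≤ 0 → g j x = 0) (h₁ : ∀ (j : Fin d) x, n ≤ x j → g j x = e j)
    (i : Fin d) (hi : e i = 0) :
    ∑ x ∈ simplices d n, primitive g i d (vertex x.1 x.2 ∘ skip 0) =
      ∑ x ∈ simplices d n, primitive g i d (vertex x.1 x.2 ∘ skip d) := by
  have hsupp : ∀ k, (support fun x : Equiv.Perm (Fin d) × (Fin d → ℤ) =>
      primitive g i d (vertex x.1 x.2 ∘ skip k)) ⊆ simplices d n := by
    rintro k ⟨π, v⟩ hx
    by_contra hmem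
    refine hx ?_
    obtain ⟨c, hc⟩ : ∃ c, v c < 0 ∨ n ≤ v c := by
      by_contra! h
      exact hmem (by simpa [simplices] using h)
    obtain ⟨t, ht, hti⟩ : ∃ t, (∀ m, g c (vertex π v m) = t) ∧ (c = i → t = 0) := by
      rcases hc with hc | hc
      · refine ⟨0, fun m => h₀ c _ ?_, fun _ => rfl⟩
        simp only [vertex]; split_ifs <;> omega
      · refine ⟨e c, fun m => h₁ c _ ?_, fun h => h ▸ hi⟩
        simp only [vertex]; split_ifs <;> omega
    refine prod_eq_zero (mem_range.2 c.2) ?_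
    simp only [comp_apply, ht, CharTwo.add_self_eq_zero]
    split_ifs with _ h
    · rfl
    · exact hti (Fin.ext h)
    · rfl
  rw [← finsum_eq_sum_of_support_subset _ (hsupp 0), ← finsum_eq_sum_of_support_subset _ (hsupp d)]
  obtain _ | d := d
  · exact i.elim0
  symm
  let E : Equiv.Perm (Fin (d + 1)) × (Fin (d + 1) → ℤ) ≃
      Equiv.Perm (Fin (d + 1)) × (Fin (d + 1) → ℤ) :=
    Equiv.prodShear (Equiv.mulLeft (finRotate (d + 1)))
      fun π => Equiv.subRight fun c => if π c = Fin.last d then 1 else 0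
  refine finsum_eq_of_bijective E E.bijective fun x => primitive_congr g i.2 fun m hm => ?_
  simpa [skip, hm, E] using vertex_eq_vertex_succ x.1 x.2 hm

/-- The sum of `cupDelta` over the grid. -/
noncomputable def degree (d : ℕ) (n : ℤ) (g : ℕ → (Fin d → ℤ) → ZMod 2) : ZMod 2 :=
  ∑ x ∈ simplices d n, cupDelta g d (vertex x.1 x.2)

lemma degree_eq_zero {n : ℤ} {g : ℕ → (Fin d → ℤ) → ZMod 2} {e : ℕ → ZMod 2}
    (h₀ : ∀ (j : Fin d) x, x j ≤ 0 → g j x = 0) (h₁ : ∀ (j : Fin d) x, n ≤ x j → g j x = e j)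
    (i : Fin d) (hi : e i = 0) : degree d n g = 0 := by
  have hid := i.2
  simp_rw [degree, ← sum_primitive_skip g _ (Nat.succ_le_of_lt i.2)]
  rw [sum_comm, sum_range_succ, ← sum_primitive_first_eq_last h₀ h₁ i hi,
    ← add_sum_erase _ _ (mem_range.2 (Nat.zero_lt_of_lt hid)), sum_eq_zero (s := (range d).erase 0),
    add_zero, CharTwo.add_self_eq_zero]
  intro k hk
  obtain ⟨hk₀, hkd⟩ := mem_erase.1 hk
  rw [simplices, sum_product_right]
  refine sum_eq_zero fun v _ => sum_perm_eq_zero (fun q => primitive g i d (q ∘ skip k))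
    (Nat.pos_of_ne_zero hk₀) (mem_range.1 hkd) (fun q q' h => ?_) v
  congr 1
  funext m
  exact h _ (skip_ne _ _)

lemma cupDelta_update_add {X : Type*} (g : ℕ → X → ZMod 2) (a b : X → ZMod 2) {i d : ℕ}
    (hi : i < d) (q : ℕ → X) :
    cupDelta (update g i (a + b)) d q =
      cupDelta (update g i a) d q + cupDelta (update g i b) d q := by
  have h : ∀ c : X → ZMod 2, cupDelta (update g i c) d q = (c (q (i + 1)) + c (q i)) *
      ∏ j ∈ (range d).erase i, (g j (q (j + 1)) + g j (q j)) := by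
    intro c
    rw [cupDelta, ← mul_prod_erase _ _ (mem_range.2 hi)]
    congr 1
    · simp
    · exact prod_congr rfl fun j hj => by simp [ne_of_mem_erase hj]
  simp only [h, Pi.add_apply]
  ring

/-- The `j`-th function vanishes below the grid and is one above it, in the `j`-th coordinate. -/
def Admissible (d : ℕ) (n : ℤ) (g : ℕ → (Fin d → ℤ) → ZMod 2) : Prop :=
  ∀ (j : Fin d) x, (x j ≤ 0 → g j x = 0) ∧ (n ≤ x j → g j x = 1)

lemma degree_update {n : ℤ} {g : ℕ → (Fin d → ℤ) → ZMod 2} (hg : Admissible d n g) (i : Fin d)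
    {r : (Fin d → ℤ) → ZMod 2} (hr : ∀ x : Fin d → ℤ, (x i ≤ 0 → r x = 0) ∧ (n ≤ x i → r x = 1)) :
    degree d n (update g i r) = degree d n g := by
  have h : degree d n (update g i (r + g i)) = 0 := by
    refine degree_eq_zero (e := update 1 (i : ℕ) 0) (fun j x hx => ?_) (fun j x hx => ?_) i
      (by simp)
    · by_cases hj : j = i
      · subst hj; simp [(hr x).1 hx, (hg j x).1 hx]
      · simp [Fin.val_ne_of_ne hj, (hg j x).1 hx]
    · by_cases hj : j = i
      · subst hj; simp [(hr x).2 hx, (hg j x).2 hx, CharTwo.add_self_eq_zero]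
      · simp [Fin.val_ne_of_ne hj, (hg j x).2 hx]
  simp_rw [degree, cupDelta_update_add g r (g i) i.2, sum_add_distrib, update_eq_self] at h
  exact CharTwo.add_eq_zero.1 h

/-- The indicator function of `1 ≤ xⱼ`. -/
def step (d : ℕ) (j : ℕ) (x : Fin d → ℤ) : ZMod 2 :=
  if h : j < d then (if 1 ≤ x ⟨j, h⟩ then 1 else 0) else 0

lemma degree_step {n : ℤ} (hn : 1 ≤ n) : degree d n (step d) = 1 := by
  have hfac : ∀ (π : Equiv.Perm (Fin d)) (v : Fin d → ℤ) (j : Fin d),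
      step d j (vertex π v (j + 1)) + step d j (vertex π v j) =
        if π j = j ∧ v j = 0 then 1 else 0 := by
    intro π v j
    have hj : π j = j ↔ (π j : ℕ) = j := Fin.ext_iff
    simp only [step, j.2, dif_pos, vertex, hj, Fin.eta]
    split_ifs <;> first | omega | rfl
  have hcup : ∀ (π : Equiv.Perm (Fin d)) (v : Fin d → ℤ), cupDelta (step d) d (vertex π v) =
      ∏ j : Fin d, if π j = j ∧ v j = 0 then 1 else 0 := by
    intro π v
    rw [cupDelta, prod_range]
    exact prod_congr rfl fun j _ => hfac π v j
  rw [degree, sum_eq_single (1, 0)]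
  · simp [hcup]
  · rintro ⟨π, v⟩ _ hne
    rw [hcup]
    by_contra h
    refine hne ?_
    have h' : ∀ j, π j = j ∧ v j = 0 := by
      intro j
      by_contra hj
      exact h (prod_eq_zero (mem_univ j) (if_neg hj))
    exact Prod.ext (Equiv.ext fun j => (h' j).1) (funext fun j => (h' j).2)
  · intro h
    exact (h (by simp [simplices]; omega)).elim

lemma degree_eq_one {n : ℤ} (hn : 1 ≤ n) {g : ℕ → (Fin d → ℤ) → ZMod 2}
    (hg : Admissible d n g) : degree d n g = 1 := by
  have hstep : Admissible d n (step d) := by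
    intro j x
    constructor <;> intro hx <;> simp [step] <;> omega
  have key : ∀ m ≤ d, degree d n (fun j => if j < m then step d j else g j) = degree d n g := by
    intro m
    induction m with
    | zero => simp
    | succ m ih =>
      intro hm
      rw [← ih (by omega), ← degree_update (g := fun j => if j < m then step d j else g j)
        (r := step d m) _ ⟨m, hm⟩ (hstep ⟨m, hm⟩)]
      · congr 1
        funext j
        by_cases hj : j = m
        · subst hj; simp
        · simp [hj, show j < m + 1 ↔ j < m by omega]
      · intro j x
        dsimp only
        split_ifs
        · exact hstep j x
        · exact hg j x
  rw [← key d le_rfl, ← degree_step hn]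
  refine sum_congr rfl fun x _ => prod_congr rfl fun j hj => ?_
  simp [mem_range.1 hj]

/-- In some cell of the grid, every one of the labels takes two different values. -/
lemma exists_cell {n : ℤ} (hn : 1 ≤ n) {g : ℕ → (Fin d → ℤ) → ZMod 2} (hg : Admissible d n g) :
    ∃ v : Fin d → ℤ, (∀ c, 0 ≤ v c ∧ v c < n) ∧ ∀ j : Fin d, ∃ y z : Fin d → ℤ,
      (∀ c, v c ≤ y c ∧ y c ≤ v c + 1) ∧ (∀ c, v c ≤ z c ∧ z c ≤ v c + 1) ∧
      g j y = 0 ∧ g j z = 1 := by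
  have h : degree d n g ≠ 0 := by rw [degree_eq_one hn hg]; exact one_ne_zero
  obtain ⟨⟨π, v⟩, hx, hne⟩ := exists_ne_zero_of_sum_ne_zero h
  refine ⟨v, by simpa [simplices] using hx, fun j => ?_⟩
  have hj := prod_ne_zero_iff.1 hne j (mem_range.2 j.2)
  have hv : ∀ m c, v c ≤ vertex π v m c ∧ vertex π v m c ≤ v c + 1 := by
    intro m c
    simp only [vertex]
    split_ifs <;> omega
  have hcases : ∀ a b : ZMod 2, a + b ≠ 0 → (a = 0 ∧ b = 1) ∨ (b = 0 ∧ a = 1) := by decide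
  rcases hcases _ _ hj with hh | hh
  · exact ⟨_, _, hv _, hv _, hh⟩
  · exact ⟨_, _, hv _, hv _, hh⟩

/-- The affine map from the grid `[0, N]ᵈ` onto the cube `[-1, 1]ᵈ`. -/
noncomputable def gridPoint (N : ℕ) (z : Fin d → ℤ) : Fin d → ℝ :=
  fun c => -1 + 2 * z c / N

lemma gridPoint_mem_Icc {N : ℕ} (hN : 0 < N) {z : Fin d → ℤ} (hz : ∀ c, 0 ≤ z c ∧ z c ≤ N) :
    gridPoint N z ∈ Set.Icc (fun _ => (-1 : ℝ)) (fun _ => 1) := by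
  have hN' : (0 : ℝ) < N := by exact_mod_cast hN
  refine ⟨fun c => ?_, fun c => ?_⟩
  · have : (0 : ℝ) ≤ z c := by exact_mod_cast (hz c).1
    have : (0 : ℝ) ≤ 2 * z c / N := by positivity
    simp only [gridPoint]; linarith
  · have : (z c : ℝ) ≤ N := by exact_mod_cast (hz c).2
    have : 2 * (z c : ℝ) / N ≤ 2 := by rw [div_le_iff₀ hN']; linarith
    simp only [gridPoint]; linarith

lemma dist_gridPoint_le {N : ℕ} {v y : Fin d → ℤ} (h : ∀ c, v c ≤ y c ∧ y c ≤ v c + 1) :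
    dist (gridPoint N y) (gridPoint N v) ≤ 2 / N := by
  refine (dist_pi_le_iff (by positivity)).2 fun c => ?_
  have h₁ : (v c : ℝ) ≤ y c := by exact_mod_cast (h c).1
  have h₂ : (y c : ℝ) ≤ v c + 1 := by exact_mod_cast (h c).2
  have : gridPoint N y c - gridPoint N v c = 2 / N * (y c - v c) := by
    simp only [gridPoint]; ring
  rw [Real.dist_eq, this, abs_of_nonneg (mul_nonneg (by positivity) (by linarith))]
  exact mul_le_of_le_one_right (by positivity) (by linarith)

/-- Approximate zeros: at every scale there is a point close to points of the cube where `f j` is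
nonpositive, respectively nonnegative. -/
lemma exists_approx (f : Fin d → ((Fin d → ℝ) → ℝ))
    (hneg : ∀ i x, x ∈ Set.Icc (fun _ => (-1 : ℝ)) (fun _ => 1) → x i = -1 → f i x ≤ 0)
    (hpos : ∀ i x, x ∈ Set.Icc (fun _ => (-1 : ℝ)) (fun _ => 1) → x i = 1 → 0 ≤ f i x)
    {N : ℕ} (hN : 0 < N) :
    ∃ u ∈ Set.Icc (fun _ : Fin d => (-1 : ℝ)) (fun _ => 1), ∀ j,
      (∃ y ∈ Set.Icc (fun _ : Fin d => (-1 : ℝ)) (fun _ => 1), dist y u ≤ 2 / N ∧ f j y ≤ 0) ∧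
      ∃ z ∈ Set.Icc (fun _ : Fin d => (-1 : ℝ)) (fun _ => 1), dist z u ≤ 2 / N ∧ 0 ≤ f j z := by
  classical
  let g : ℕ → (Fin d → ℤ) → ZMod 2 := fun j x =>
    if h : j < d then
      if x ⟨j, h⟩ ≤ 0 then 0 else if (N : ℤ) ≤ x ⟨j, h⟩ then 1
      else if 0 ≤ f ⟨j, h⟩ (gridPoint N x) then 1 else 0
    else 0
  have hgj : ∀ (j : Fin d) x, g j x = if x j ≤ 0 then 0 else if (N : ℤ) ≤ x j then 1
      else if 0 ≤ f j (gridPoint N x) then 1 else 0 := fun j x => by simp [g]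
  have hg : Admissible d N g := by
    intro j x
    rw [hgj]
    exact ⟨fun h => if_pos h, fun h => by rw [if_neg (by omega), if_pos h]⟩
  obtain ⟨v, hv, hcell⟩ := exists_cell (by omega) hg
  refine ⟨gridPoint N v, gridPoint_mem_Icc hN fun c => ⟨(hv c).1, (hv c).2.le⟩, fun j => ?_⟩
  obtain ⟨y, z, hy, hz, hgy, hgz⟩ := hcell j
  have hmem : ∀ w : Fin d → ℤ, (∀ c, v c ≤ w c ∧ w c ≤ v c + 1) →
      ∀ c, 0 ≤ w c ∧ w c ≤ N := fun w hw c => by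
    have := hv c
    have := hw c
    omega
  have hN' : (N : ℝ) ≠ 0 := by positivity
  have hymem := gridPoint_mem_Icc hN (hmem y hy)
  have hzmem := gridPoint_mem_Icc hN (hmem z hz)
  refine ⟨⟨_, hymem, dist_gridPoint_le hy, ?_⟩, ⟨_, hzmem, dist_gridPoint_le hz, ?_⟩⟩
  · rw [hgj] at hgy
    split_ifs at hgy with h₁ h₂ h₃
    · have : y j = 0 := le_antisymm h₁ (hmem y hy j).1
      exact hneg j _ hymem (by simp [gridPoint, this])
    · exact absurd hgy one_ne_zero
    · exact absurd hgy one_ne_zero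
    · exact (not_le.1 h₃).le
  · rw [hgj] at hgz
    split_ifs at hgz with h₁ h₂ h₃
    · exact absurd hgz zero_ne_one
    · have : z j = N := le_antisymm (hmem z hz j).2 h₂
      refine hpos j _ hzmem ?_
      simp only [gridPoint, this, Int.cast_natCast]
      field_simp
      norm_num
    · exact h₃
    · exact absurd hgz zero_ne_one

end PoincareMiranda

open Filter Topology in
/-- Poincaré–Miranda theorem. -/
theorem stmt2 {d : ℕ} (f : Fin d → ((Fin d → ℝ) → ℝ))
    (hc : ∀ i, ContinuousOn (f i) (Set.Icc (fun _ => (-1 : ℝ)) (fun _ => 1)))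
    (hneg : ∀ i x, x ∈ Set.Icc (fun _ => (-1 : ℝ)) (fun _ => 1) → x i = -1 → f i x ≤ 0)
    (hpos : ∀ i x, x ∈ Set.Icc (fun _ => (-1 : ℝ)) (fun _ => 1) → x i = 1 → 0 ≤ f i x) :
    ∃ x ∈ Set.Icc (fun _ => (-1 : ℝ)) (fun _ => 1), ∀ i, f i x = 0 := by
  choose u hu hyz using fun N : ℕ => PoincareMiranda.exists_approx f hneg hpos N.succ_pos
  obtain ⟨x, hx, φ, hφ, hlim⟩ := isCompact_Icc.tendsto_subseq hu
  refine ⟨x, hx, fun j => ?_⟩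
  choose y hy hyd hfy using fun N => (hyz N j).1
  choose z hz hzd hfz using fun N => (hyz N j).2
  have hscale : Tendsto (fun N : ℕ => 2 / ((φ N).succ : ℝ)) atTop (𝓝 0) :=
    ((tendsto_const_div_atTop_nhds_zero_nat (2 : ℝ)).comp (tendsto_add_atTop_nat 1)).comp
      hφ.tendsto_atTop
  have hclose : ∀ w : ℕ → Fin d → ℝ, (∀ N, w N ∈ Set.Icc (fun _ => (-1 : ℝ)) (fun _ => 1)) →
      (∀ N, dist (w N) (u N) ≤ 2 / (N.succ : ℝ)) →
      Tendsto (fun N => f j (w (φ N))) atTop (𝓝 (f j x)) := by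
    intro w hw hwd
    have hdist : Tendsto (fun N => dist (u (φ N)) (w (φ N))) atTop (𝓝 0) :=
      squeeze_zero (fun _ => dist_nonneg) (fun N => by rw [dist_comm]; exact hwd (φ N)) hscale
    exact (hc j x hx).tendsto.comp (tendsto_nhdsWithin_iff.2
      ⟨(tendsto_iff_of_dist hdist).1 hlim, Eventually.of_forall fun N => hw (φ N)⟩)
  exact le_antisymm (le_of_tendsto' (hclose y hy hyd) fun N => hfy (φ N))
    (ge_of_tendsto' (hclose z hz hzd) fun N => hfz (φ N))
end

section
/- Let P₁, ..., P_d ⊂ ℝ^d be finite point sets that are well-separated and in weak general position. Then for every (α₁, ..., α_d) ∈ [|P₁|] × ... × [|P_d|], there exists exactly one hyperplane h (an (α₁,...,α_d)-cut) such that for each i ∈ [d], exactly one point of P_i lies on h and exactly α_i − 1 points of P_i lie strictly below h, where h is oriented by the orientation of the simplex formed by the d incidence points (one from each P_i). -/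
/-- The determinant of the `(d+1) × (d+1)` matrix whose first `d` rows are the points
`q i` appended with `1` and whose last row is the query point `x` appended with `1`.
A point `x` lies strictly below (above) the hyperplane spanned by `q` iff this is
negative (positive). -/
noncomputable def detRows {d : ℕ} (q : Fin d → Fin d → ℝ) (x : Fin d → ℝ) : ℝ :=
  Matrix.det (Matrix.of (Fin.snoc (fun i => (Fin.snoc (q i) 1 : Fin (d + 1) → ℝ))
    (Fin.snoc x 1)))

/-- `(P₁, …, P_d)` is well-separated: for every index set `I` there is a hyperplane
strictly separating `⋃_{i ∈ I} P i` from `⋃_{i ∉ I} P i`. -/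
def IsWellSeparated {d : ℕ} (P : Fin d → Finset (Fin d → ℝ)) : Prop :=
  ∀ I : Set (Fin d), ∃ (w : Fin d → ℝ) (c : ℝ), w ≠ 0 ∧
    (∀ i ∈ I, ∀ q ∈ P i, ∑ j, w j * q j < c) ∧
    (∀ i, i ∉ I → ∀ q ∈ P i, c < ∑ j, w j * q j)

/-- Weak general position: no hyperplane spanned by one point from each `P i`
contains any other point of `⋃ P i`. -/
def WeakGenPos {d : ℕ} (P : Fin d → Finset (Fin d → ℝ)) : Prop :=
  ∀ p : Fin d → (Fin d → ℝ), (∀ i, p i ∈ P i) → AffineIndependent ℝ p →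
    ∀ q : Fin d → ℝ, (∃ i, q ∈ P i) → q ∉ Set.range p → detRows p q ≠ 0

/-- The hyperplane spanned by `p` (with `p i ∈ P i`) is an `(α₁,…,α_d)`-cut:
for each `i`, exactly one point of `P i` lies on it and exactly `α i − 1` points
of `P i` lie strictly below it. -/
def IsAlphaCut {d : ℕ} (P : Fin d → Finset (Fin d → ℝ)) (α : Fin d → ℕ)
    (p : Fin d → (Fin d → ℝ)) : Prop :=
  (∀ i, p i ∈ P i) ∧ AffineIndependent ℝ p ∧
    ∀ i, {q : Fin d → ℝ | q ∈ P i ∧ detRows p q = 0}.ncard = 1 ∧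
      {q : Fin d → ℝ | q ∈ P i ∧ detRows p q < 0}.ncard = α i - 1

/-- The homogeneous lift of a point, appending the coordinate `1`. -/
noncomputable def homLift {d : ℕ} (x : Fin d → ℝ) : Fin (d + 1) → ℝ := Fin.snoc x 1

/-- The square matrix whose first `d` rows are the lifts of `x` and whose last row is `v`. -/
noncomputable def liftMatrix {d : ℕ} (x : Fin d → Fin d → ℝ) (v : Fin (d + 1) → ℝ) :
    Matrix (Fin (d + 1)) (Fin (d + 1)) ℝ :=
  Matrix.of (Fin.snoc (fun i => homLift (x i)) v)

/-- The coefficient vector of the affine function `detRows p`. -/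
noncomputable def planeCoeff {d : ℕ} (p : Fin d → Fin d → ℝ) : Fin (d + 1) → ℝ :=
  fun j => (liftMatrix p (Pi.single j 1)).det

theorem liftMatrix_eq_updateRow {d : ℕ} (x : Fin d → Fin d → ℝ) (v : Fin (d + 1) → ℝ) :
    liftMatrix x v = (liftMatrix x 0).updateRow (Fin.last d) v := by
  ext i j
  refine Fin.lastCases ?_ (fun i => ?_) i <;>
    simp [liftMatrix, Matrix.updateRow_apply, (Fin.castSucc_lt_last _).ne]

theorem det_liftMatrix {d : ℕ} (p : Fin d → Fin d → ℝ) (v : Fin (d + 1) → ℝ) :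
    (liftMatrix p v).det = planeCoeff p ⬝ᵥ v := by
  have key : ∀ u, (liftMatrix p u).det =
      (LinearMap.proj (Fin.last d) ∘ₗ Matrix.cramer (liftMatrix p 0).transpose) u := by
    intro u
    rw [liftMatrix_eq_updateRow]
    simp [Matrix.cramer_transpose_apply]
  rw [key, LinearMap.pi_apply_eq_sum_univ]
  simp only [dotProduct, planeCoeff, key, smul_eq_mul]
  refine Finset.sum_congr rfl fun j _ => ?_
  rw [mul_comm]
  congr 2
  ext k
  simp [Pi.single_apply, eq_comm]

theorem detRows_eq {d : ℕ} (p : Fin d → Fin d → ℝ) (x : Fin d → ℝ) :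
    detRows p x = planeCoeff p ⬝ᵥ homLift x := det_liftMatrix p (homLift x)

theorem detRows_self {d : ℕ} (p : Fin d → Fin d → ℝ) (i : Fin d) : detRows p (p i) = 0 := by
  refine Matrix.det_zero_of_row_eq (i := i.castSucc) (j := Fin.last d)
    (Fin.castSucc_lt_last i).ne ?_
  ext k
  simp

theorem homLift_combination {d : ℕ} (x y : Fin d → ℝ) {a b : ℝ} (h : a + b = 1) :
    homLift (a • x + b • y) = a • homLift x + b • homLift y := by
  ext j
  refine Fin.lastCases ?_ (fun j => ?_) j <;> simp [homLift, h]

theorem continuous_homLift {d : ℕ} : Continuous (homLift : (Fin d → ℝ) → _) := by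
  refine continuous_pi fun j => ?_
  refine Fin.lastCases ?_ (fun j => ?_) j
  · simpa [homLift] using continuous_const
  · simpa [homLift] using continuous_apply j

theorem continuous_det_liftMatrix {d : ℕ} :
    Continuous fun z : (Fin d → Fin d → ℝ) × (Fin (d + 1) → ℝ) =>
      (liftMatrix z.1 z.2).det := by
  refine Continuous.matrix_det (continuous_matrix fun i j => ?_)
  refine Fin.lastCases ?_ (fun i => ?_) i
  · simpa [liftMatrix, Function.comp_def] using (continuous_apply j).comp continuous_snd
  · have hi : Continuous fun z : (Fin d → Fin d → ℝ) × (Fin (d + 1) → ℝ) => z.1 i := by fun_prop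
    simpa [liftMatrix, Function.comp_def] using
      (continuous_apply j).comp (continuous_homLift.comp hi)

namespace IsWellSeparated

variable {d : ℕ} {P : Fin d → Finset (Fin d → ℝ)}

theorem eq_zero_of_sum_eq_zero (hws : IsWellSeparated P) {x : Fin d → Fin d → ℝ}
    (hx : ∀ i, x i ∈ convexHull ℝ (P i : Set (Fin d → ℝ))) {a : Fin d → ℝ}
    (ha : ∑ i, a i = 0) (hax : ∀ j, ∑ i, a i * x i j = 0) : a = 0 := by
  obtain ⟨w, c, -, hlt, hgt⟩ := hws {i | 0 < a i}
  have hlin : IsLinearMap ℝ fun y : Fin d → ℝ => ∑ j, w j * y j :=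
    ⟨fun y z => by simp [mul_add, Finset.sum_add_distrib],
      fun r y => by simp [Finset.mul_sum, mul_left_comm]⟩
  have hlt' : ∀ i, 0 < a i → ∑ j, w j * x i j < c := fun i hi =>
    convexHull_min (fun q hq => hlt i hi q hq) (convex_halfSpace_lt hlin c) (hx i)
  have hgt' : ∀ i, ¬ 0 < a i → c < ∑ j, w j * x i j := fun i hi =>
    convexHull_min (fun q hq => hgt i hi q hq) (convex_halfSpace_gt hlin c) (hx i)
  have hsum : ∑ i, a i * (∑ j, w j * x i j - c) = 0 := by
    simp only [mul_sub, Finset.sum_sub_distrib, ← Finset.sum_mul, ha, zero_mul, sub_zero,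
      Finset.mul_sum]
    rw [Finset.sum_comm]
    refine Finset.sum_eq_zero fun j _ => ?_
    rw [← mul_zero (w j), ← hax j, Finset.mul_sum]
    exact Finset.sum_congr rfl fun i _ => mul_left_comm _ _ _
  have hterm : ∀ i ∈ Finset.univ, a i * (∑ j, w j * x i j - c) ≤ 0 := by
    intro i _
    by_cases hi : 0 < a i
    · nlinarith [hlt' i hi]
    · nlinarith [hgt' i hi]
  have hall := (Finset.sum_eq_zero_iff_of_nonpos hterm).1 hsum
  ext i
  rcases mul_eq_zero.1 (hall i (Finset.mem_univ i)) with h | h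
  · exact h
  · by_cases hi : 0 < a i
    · linarith [hlt' i hi]
    · linarith [hgt' i hi]

theorem affineIndependent (hws : IsWellSeparated P) {x : Fin d → Fin d → ℝ}
    (hx : ∀ i, x i ∈ convexHull ℝ (P i : Set (Fin d → ℝ))) : AffineIndependent ℝ x := by
  rw [affineIndependent_iff]
  intro s w hw hwx i hi
  have := hws.eq_zero_of_sum_eq_zero hx (a := fun i => if i ∈ s then w i else 0)
    (by simpa using hw) (fun j => by simpa using congrFun hwx j)
  simpa [hi] using congrFun this i

theorem det_liftMatrix_ne_zero (hws : IsWellSeparated P) {x : Fin d → Fin d → ℝ}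
    (hx : ∀ i, x i ∈ convexHull ℝ (P i : Set (Fin d → ℝ))) {g : Fin (d + 1) → ℝ} (hg : g ≠ 0)
    (hgx : ∀ i, g ⬝ᵥ homLift (x i) = 0) : (liftMatrix x g).det ≠ 0 := by
  intro h
  obtain ⟨v, hv, hvM⟩ := Matrix.exists_vecMul_eq_zero_iff.2 h
  have hcol : ∀ j, ∑ i : Fin d, v i.castSucc * homLift (x i) j + v (Fin.last d) * g j = 0 := by
    intro j
    have := congrFun hvM j
    simpa [Matrix.vecMul, dotProduct, Fin.sum_univ_castSucc, liftMatrix] using this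
  have hlast : v (Fin.last d) = 0 := by
    have h1 : ∑ j, g j * (∑ i : Fin d, v i.castSucc * homLift (x i) j + v (Fin.last d) * g j)
        = 0 := by simp [hcol]
    simp only [mul_add, Finset.sum_add_distrib, Finset.mul_sum] at h1
    rw [Finset.sum_comm] at h1
    have h2 : ∀ i : Fin d, ∑ j, g j * (v i.castSucc * homLift (x i) j) = 0 := by
      intro i
      rw [← mul_zero (v i.castSucc), ← hgx i, dotProduct, Finset.mul_sum]
      exact Finset.sum_congr rfl fun j _ => mul_left_comm _ _ _
    have h4 : ∑ j, g j * (v (Fin.last d) * g j) = v (Fin.last d) * g ⬝ᵥ g := by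
      rw [dotProduct, Finset.mul_sum]
      exact Finset.sum_congr rfl fun j _ => mul_left_comm _ _ _
    simp only [h2, Finset.sum_const_zero, zero_add, h4] at h1
    exact (mul_eq_zero.1 h1).resolve_right fun h3 => hg (dotProduct_self_eq_zero.1 h3)
  have hzero := hws.eq_zero_of_sum_eq_zero hx (a := fun i => v i.castSucc)
    (by simpa [hlast, homLift] using hcol (Fin.last d))
    (fun j => by simpa [hlast, homLift] using hcol j.castSucc)
  refine hv (funext fun i => ?_)
  exact Fin.lastCases hlast (fun i => congrFun hzero i) i

theorem planeCoeff_ne_zero (hws : IsWellSeparated P) {x : Fin d → Fin d → ℝ}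
    (hx : ∀ i, x i ∈ convexHull ℝ (P i : Set (Fin d → ℝ))) : planeCoeff x ≠ 0 := by
  intro h
  have hdet : (liftMatrix x 0).det = 0 := by simp [det_liftMatrix]
  obtain ⟨g, hg, hgx⟩ := Matrix.exists_mulVec_eq_zero_iff.2 hdet
  refine hws.det_liftMatrix_ne_zero hx hg (fun i => ?_) (by simp [det_liftMatrix, h])
  have := congrFun hgx i.castSucc
  rw [dotProduct_comm]
  simpa [Matrix.mulVec, liftMatrix] using this

/-- The orientation sign is constant along a path of transversal hyperplanes. -/
theorem det_liftMatrix_pos_of_path (hws : IsWellSeparated P) {x : ℝ → Fin d → Fin d → ℝ}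
    {g : ℝ → Fin (d + 1) → ℝ} (hxc : ContinuousOn (fun t => (liftMatrix (x t) (g t)).det)
      (Set.Icc 0 1))
    (hx : ∀ t ∈ Set.Icc (0 : ℝ) 1, ∀ i, x t i ∈ convexHull ℝ (P i : Set (Fin d → ℝ)))
    (hg : ∀ t ∈ Set.Icc (0 : ℝ) 1, g t ≠ 0)
    (hgx : ∀ t ∈ Set.Icc (0 : ℝ) 1, ∀ i, g t ⬝ᵥ homLift (x t i) = 0)
    (h0 : 0 < (liftMatrix (x 0) (g 0)).det) : 0 < (liftMatrix (x 1) (g 1)).det := by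
  by_contra! h1
  obtain ⟨t, ht, hzero⟩ := intermediate_value_Icc' zero_le_one hxc ⟨h1, h0.le⟩
  exact hws.det_liftMatrix_ne_zero (hx t ht) (hg t ht) (hgx t ht) hzero

theorem det_liftMatrix_pos_of_pos (hws : IsWellSeparated P) {x y : Fin d → Fin d → ℝ}
    (hx : ∀ i, x i ∈ convexHull ℝ (P i : Set (Fin d → ℝ)))
    (hy : ∀ i, y i ∈ convexHull ℝ (P i : Set (Fin d → ℝ))) {g : Fin (d + 1) → ℝ} (hg : g ≠ 0)
    (hgx : ∀ i, g ⬝ᵥ homLift (x i) = 0) (hgy : ∀ i, g ⬝ᵥ homLift (y i) = 0)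
    (h : 0 < (liftMatrix x g).det) : 0 < (liftMatrix y g).det := by
  have := hws.det_liftMatrix_pos_of_path (x := fun t i => (1 - t) • x i + t • y i)
    (g := fun _ => g) (continuous_det_liftMatrix.comp
      (f := fun t : ℝ => (fun i => (1 - t) • x i + t • y i, g)) (by fun_prop)).continuousOn
    (fun t ht i => convex_convexHull ℝ _ (hx i) (hy i) (by linarith [ht.2]) ht.1 (by ring))
    (fun _ _ => hg)
    (fun t _ i => by
      rw [homLift_combination _ _ (by ring)]
      simp [hgx, hgy])
    (by simpa using h)
  simpa using this

theorem eq_of_detRows_eq_zero (hws : IsWellSeparated P) (hgp : WeakGenPos P)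
    {p : Fin d → Fin d → ℝ} (hp : ∀ i, p i ∈ P i) {i : Fin d} {q : Fin d → ℝ} (hq : q ∈ P i)
    (h : detRows p q = 0) : q = p i := by
  by_contra hne
  refine hgp p hp (hws.affineIndependent fun i => subset_convexHull ℝ _ (hp i)) q ⟨i, hq⟩ ?_ h
  rintro ⟨j, rfl⟩
  have hji : j ≠ i := fun hji => hne (by rw [hji])
  have hup : ∀ k, Function.update p i (p j) k ∈ convexHull ℝ (P k : Set (Fin d → ℝ)) := by
    intro k
    refine subset_convexHull ℝ _ ?_
    by_cases hk : k = i
    · subst hk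
      simpa using hq
    · simpa [hk] using hp k
  exact hji ((hws.affineIndependent hup).injective (by simp [hji]))

end IsWellSeparated

/-- A zero of the pencil from `f` to `-f'` moves continuously along a segment whose endpoints
separate the pencil. -/
theorem exists_continuousOn_zero_pencil {d : ℕ} {K : Set (Fin d → ℝ)} (hK : Convex ℝ K)
    {f f' : Fin (d + 1) → ℝ} {a b : Fin d → ℝ} (ha : a ∈ K) (hb : b ∈ K)
    (hfa : f ⬝ᵥ homLift a ≤ 0) (hfa' : 0 ≤ f' ⬝ᵥ homLift a)
    (hfb : 0 ≤ f ⬝ᵥ homLift b) (hfb' : f' ⬝ᵥ homLift b ≤ 0)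
    (hf : f ⬝ᵥ homLift a < f ⬝ᵥ homLift b) (hf' : f' ⬝ᵥ homLift b < f' ⬝ᵥ homLift a) :
    ∃ x : ℝ → Fin d → ℝ, ContinuousOn x (Set.Icc 0 1) ∧ ∀ t ∈ Set.Icc (0 : ℝ) 1,
      x t ∈ K ∧ ((1 - t) • f - t • f') ⬝ᵥ homLift (x t) = 0 := by
  set u : ℝ → ℝ := fun t => (1 - t) * (f ⬝ᵥ homLift a) - t * (f' ⬝ᵥ homLift a) with hu
  set v : ℝ → ℝ := fun t => (1 - t) * (f ⬝ᵥ homLift b) - t * (f' ⬝ᵥ homLift b) with hv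
  have huc : Continuous u := by fun_prop
  have hvc : Continuous v := by fun_prop
  have hu0 : ∀ t ∈ Set.Icc (0 : ℝ) 1, u t ≤ 0 := fun t ht => by
    have := mul_nonneg (sub_nonneg.2 ht.2) (neg_nonneg.2 hfa)
    have := mul_nonneg ht.1 hfa'
    simp only [hu]
    linarith
  have hv0 : ∀ t ∈ Set.Icc (0 : ℝ) 1, 0 ≤ v t := fun t ht => by
    have := mul_nonneg (sub_nonneg.2 ht.2) hfb
    have := mul_nonneg ht.1 (neg_nonneg.2 hfb')
    simp only [hv]
    linarith
  have huv : ∀ t ∈ Set.Icc (0 : ℝ) 1, 0 < v t - u t := fun t ht => by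
    have h1 := mul_nonneg (sub_nonneg.2 ht.2) (sub_pos.2 hf).le
    simp only [hu, hv]
    rcases ht.1.eq_or_lt with h | h
    · subst h
      linarith
    · have := mul_pos h (sub_pos.2 hf')
      linarith
  refine ⟨fun t => (v t / (v t - u t)) • a + (-u t / (v t - u t)) • b, ?_, fun t ht => ?_⟩
  · exact ((hvc.continuousOn.div (hvc.sub huc).continuousOn fun t ht => (huv t ht).ne').smul
      continuousOn_const).add ((huc.neg.continuousOn.div (hvc.sub huc).continuousOn
        fun t ht => (huv t ht).ne').smul continuousOn_const)
  · have hne := (huv t ht).ne'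
    have hsum : v t / (v t - u t) + -u t / (v t - u t) = 1 := by
      field_simp
      ring
    refine ⟨hK ha hb (div_nonneg (hv0 t ht) (huv t ht).le)
      (div_nonneg (neg_nonneg.2 (hu0 t ht)) (huv t ht).le) hsum, ?_⟩
    rw [homLift_combination _ _ hsum]
    have hua : ((1 - t) • f - t • f') ⬝ᵥ homLift a = u t := by simp [hu, sub_dotProduct]
    have hvb : ((1 - t) • f - t • f') ⬝ᵥ homLift b = v t := by simp [hv, sub_dotProduct]
    rw [dotProduct_add, dotProduct_smul, dotProduct_smul, hua, hvb, smul_eq_mul, smul_eq_mul]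
    ring

/-- If no more points of a finite set lie strictly below `g` than strictly below `f`, and `f`
vanishes somewhere on the set, then some point is weakly below `f` and weakly above `g`. -/
theorem exists_nonpos_nonneg_of_card_le {β : Type*} {S : Finset β} {f g : β → ℝ}
    (hcard : (S.filter fun q => g q < 0).card ≤ (S.filter fun q => f q < 0).card) {p : β}
    (hp : p ∈ S) (hfp : f p = 0) : ∃ a ∈ S, f a ≤ 0 ∧ 0 ≤ g a := by
  by_contra! hcon
  refine hcard.not_gt (Finset.card_lt_card (Finset.ssubset_iff_of_subset ?_ |>.2 ⟨p, ?_, ?_⟩))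
  · intro q hq
    rw [Finset.mem_filter] at hq ⊢
    exact ⟨hq.1, hcon q hq.1 hq.2.le⟩
  · exact Finset.mem_filter.2 ⟨hp, hcon p hp hfp.le⟩
  · simp [hfp]

/-- A transversal choice of points is determined by the numbers of points below its hyperplane. -/
theorem eq_of_card_below_eq {d : ℕ} {P : Fin d → Finset (Fin d → ℝ)}
    (hws : IsWellSeparated P) (hgp : WeakGenPos P) {p p' : Fin d → Fin d → ℝ}
    (hp : ∀ i, p i ∈ P i) (hp' : ∀ i, p' i ∈ P i)
    (hcard : ∀ i, ((P i).filter fun q => detRows p q < 0).card =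
      ((P i).filter fun q => detRows p' q < 0).card) : p = p' := by
  by_contra hne
  have hull : ∀ {i q}, q ∈ P i → q ∈ convexHull ℝ (P i : Set (Fin d → ℝ)) :=
    fun hq => subset_convexHull ℝ _ hq
  have hf := hws.planeCoeff_ne_zero fun i => hull (hp i)
  have hf' := hws.planeCoeff_ne_zero fun i => hull (hp' i)
  set f := planeCoeff p with hfdef
  set f' := planeCoeff p' with hfdef'
  have hg : ∀ t ∈ Set.Icc (0 : ℝ) 1, (1 - t) • f - t • f' ≠ 0 := by
    intro t ht h0
    rw [sub_eq_zero] at h0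
    have ht1 : 1 - t ≠ 0 := by
      intro h
      have ht : t = 1 := by linarith
      rw [h, ht, zero_smul, one_smul] at h0
      exact hf' h0.symm
    refine hne (funext fun i => ?_)
    refine (hws.eq_of_detRows_eq_zero hgp hp (hp' i) ?_).symm
    have h1 : (1 - t) * (f ⬝ᵥ homLift (p' i)) = t * (f' ⬝ᵥ homLift (p' i)) := by
      rw [← smul_eq_mul, ← smul_eq_mul, ← smul_dotProduct, ← smul_dotProduct, h0]
    rw [← detRows_eq p', detRows_self, mul_zero, ← detRows_eq] at h1
    exact (mul_eq_zero.1 h1).resolve_left ht1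
  have hpath : ∀ i, ∃ x : ℝ → Fin d → ℝ, ContinuousOn x (Set.Icc 0 1) ∧
      ∀ t ∈ Set.Icc (0 : ℝ) 1, x t ∈ convexHull ℝ (P i : Set (Fin d → ℝ)) ∧
        ((1 - t) • f - t • f') ⬝ᵥ homLift (x t) = 0 := by
    intro i
    by_cases hi : p i = p' i
    · refine ⟨fun _ => p i, continuousOn_const, fun t _ => ⟨hull (hp i), ?_⟩⟩
      have h' := detRows_self p' i
      rw [← hi] at h'
      rw [sub_dotProduct, smul_dotProduct, smul_dotProduct, ← detRows_eq, ← detRows_eq,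
        detRows_self, h']
      simp
    · obtain ⟨a, ha, hfa, hfa'⟩ :=
        exists_nonpos_nonneg_of_card_le (hcard i).ge (hp i) (detRows_self p i)
      obtain ⟨b, hb, hfb', hfb⟩ :=
        exists_nonpos_nonneg_of_card_le (hcard i).le (hp' i) (detRows_self p' i)
      have hlt : detRows p a < detRows p b := by
        by_contra! hle
        have hza := hws.eq_of_detRows_eq_zero hgp hp ha (by linarith)
        have hzb := hws.eq_of_detRows_eq_zero hgp hp hb (by linarith)
        rw [hza] at hfa'
        rw [hzb] at hfb'
        exact hi (hws.eq_of_detRows_eq_zero hgp hp' (hp i) (by linarith))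
      have hlt' : detRows p' b < detRows p' a := by
        by_contra! hle
        have hza := hws.eq_of_detRows_eq_zero hgp hp' ha (by linarith)
        have hzb := hws.eq_of_detRows_eq_zero hgp hp' hb (by linarith)
        rw [hza] at hfa
        rw [hzb] at hfb
        exact hi (hws.eq_of_detRows_eq_zero hgp hp (hp' i) (by linarith)).symm
      simp only [detRows_eq] at hfa hfa' hfb hfb' hlt hlt'
      exact exists_continuousOn_zero_pencil (convex_convexHull ℝ _) (hull ha) (hull hb)
        hfa hfa' hfb hfb' hlt hlt'
  choose x hxc hx using hpath
  have h0 : (0 : ℝ) ∈ Set.Icc (0 : ℝ) 1 := ⟨le_rfl, zero_le_one⟩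
  have h1 : (1 : ℝ) ∈ Set.Icc (0 : ℝ) 1 := ⟨zero_le_one, le_rfl⟩
  have hpos : ∀ v : Fin (d + 1) → ℝ, v ≠ 0 → 0 < v ⬝ᵥ v := fun v hv =>
    lt_of_le_of_ne (Finset.sum_nonneg fun j _ => mul_self_nonneg (v j))
      fun h => hv (dotProduct_self_eq_zero.1 h.symm)
  have hstart : 0 < (liftMatrix (fun i => x i 0) f).det :=
    hws.det_liftMatrix_pos_of_pos (fun i => hull (hp i)) (fun i => (hx i 0 h0).1) hf
      (fun i => by rw [← detRows_eq, detRows_self]) (fun i => by simpa using (hx i 0 h0).2)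
      (by rw [det_liftMatrix]; exact hpos f hf)
  have hmove := hws.det_liftMatrix_pos_of_path (x := fun t i => x i t)
    (g := fun t => (1 - t) • f - t • f')
    (continuous_det_liftMatrix.comp_continuousOn
      (f := fun t : ℝ => (fun i => x i t, (1 - t) • f - t • f'))
      ((continuousOn_pi.2 hxc).prodMk (by fun_prop)))
    (fun t ht i => (hx i t ht).1) hg (fun t ht i => (hx i t ht).2) (by simpa using hstart)
  have hend := hws.det_liftMatrix_pos_of_pos (fun i => (hx i 1 h1).1) (fun i => hull (hp' i))
    (hg 1 h1) (fun i => (hx i 1 h1).2)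
    (fun i => by simp [← detRows_eq, hfdef', detRows_self]) hmove
  rw [det_liftMatrix] at hend
  have := hpos f' hf'
  simp [← hfdef'] at hend
  linarith

/-- The discrete α-Ham-Sandwich theorem: for well-separated point sets in weak
general position, every `(α₁,…,α_d)`-cut exists and is unique. -/
theorem stmt4 {d : ℕ} (P : Fin d → Finset (Fin d → ℝ))
    (hws : IsWellSeparated P) (hgp : WeakGenPos P)
    (α : Fin d → ℕ) (hα : ∀ i, 1 ≤ α i ∧ α i ≤ (P i).card) :
    ∃! p : Fin d → (Fin d → ℝ), IsAlphaCut P α p := by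
  classical
  let below : (∀ i, P i) → ∀ i, Fin (P i).card := fun p i =>
    ⟨((P i).filter fun q => detRows (fun k => (p k : Fin d → ℝ)) q < 0).card,
      Finset.card_lt_card (Finset.filter_ssubset.2
        ⟨p i, (p i).2, (detRows_self (fun k => (p k : Fin d → ℝ)) i).not_lt⟩)⟩
  have hinj : Function.Injective below := fun p p' h => by
    have := eq_of_card_below_eq hws hgp (fun i => (p i).2) (fun i => (p' i).2)
      fun i => congrArg Fin.val (congrFun h i)
    exact funext fun i => Subtype.ext (congrFun this i)
  have hsurj : Function.Surjective below :=
    ((Fintype.bijective_iff_injective_and_card below).2 ⟨hinj, by simp⟩).2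
  have hncard : ∀ (p : Fin d → Fin d → ℝ) (i : Fin d),
      {q : Fin d → ℝ | q ∈ P i ∧ detRows p q < 0}.ncard =
        ((P i).filter fun q => detRows p q < 0).card := fun p i => by
    rw [← Set.ncard_coe_finset, Finset.coe_filter]
  obtain ⟨p, hp⟩ := hsurj fun i => ⟨α i - 1, by have := hα i; omega⟩
  refine ⟨fun i => p i, ⟨fun i => (p i).2,
    hws.affineIndependent fun i => subset_convexHull ℝ _ (p i).2, fun i => ⟨?_, ?_⟩⟩, ?_⟩
  · rw [Set.ncard_eq_one]
    refine ⟨p i, Set.ext fun q => ⟨fun hq => ?_, ?_⟩⟩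
    · exact hws.eq_of_detRows_eq_zero hgp (fun i => (p i).2) hq.1 hq.2
    · rintro rfl
      exact ⟨(p i).2, detRows_self (fun k => (p k : Fin d → ℝ)) i⟩
  · rw [hncard]
    exact congrArg Fin.val (congrFun hp i)
  · rintro p' ⟨hmem, -, hcut⟩
    refine eq_of_card_below_eq hws hgp hmem (fun i => (p i).2) fun i => ?_
    rw [← hncard, (hcut i).2]
    exact (congrArg Fin.val (congrFun hp i)).symm
end

section
/- Suppose f₁, ..., f_d : [-1,1]^d → ℝ are continuous, each f_i strictly negative on the face x_i = -1 and strictly positive on the face x_i = 1, and suppose the common zero set Z = {x : f_i(x) = 0 for all i} is finite. If additionally for distinct points of Z the sign patterns of some auxiliary counting functions are distinct, then in particular Z is nonempty; i.e., under just the boundary sign conditions, there exists x* ∈ (-1,1)^d (in the open cube) with f_i(x*) = 0 for all i. -/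
open Finset IncidenceAlgebra

section Grid

variable {ι : Type*}

/-- The incidence algebra over `ZMod 2` of the integer grid. -/
abbrev GridAlgebra (ι : Type*) : Type _ := IncidenceAlgebra (ZMod 2) (ι → ℤ)

namespace GridAlgebra

lemma add_self (Z : GridAlgebra ι) : Z + Z = 0 := by
  ext x y _
  exact CharTwo.add_self_eq_zero _

/-- A `ZMod 2`-valued labelling of the grid in each coordinate direction which is `0` below the
cube `[0, n]^ι` and `1` above it. -/
def IsLabelling (n : ℤ) (g : ι → (ι → ℤ) → ZMod 2) : Prop :=
  ∀ j x, (x j ≤ 0 → g j x = 0) ∧ (n ≤ x j → g j x = 1)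

/-- The labelling by the half-spaces `1 ≤ x j`. -/
def halfSpace (j : ι) (x : ι → ℤ) : ZMod 2 := if 1 ≤ x j then 1 else 0

lemma isLabelling_halfSpace {n : ℤ} (hn : 1 ≤ n) : IsLabelling n (halfSpace (ι := ι)) :=
  fun _ _ => ⟨fun h => if_neg (by lia), fun h => if_pos (hn.trans h)⟩

/-- Vanishing on all intervals contained in a unit cube. -/
def Negligible (Z : GridAlgebra ι) : Prop := ∀ x y, y ≤ x + 1 → Z x y = 0

lemma Negligible.add {X Y : GridAlgebra ι} (hX : Negligible X) (hY : Negligible Y) :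
    Negligible (X + Y) := fun x y h => by
  rw [IncidenceAlgebra.add_apply, hX x y h, hY x y h, add_zero]

/-- The entries of `Z` are supported in the intervals that meet the slab `0 ≤ x j ≤ n`. -/
def MeetsSlab (n : ℤ) (j : ι) (Z : GridAlgebra ι) : Prop :=
  ∀ u v, Z u v ≠ 0 → u j ≤ n ∧ 0 ≤ v j

variable [Fintype ι]

/-- A function on the grid, as a diagonal element of the incidence algebra. -/
def diag (g : (ι → ℤ) → ZMod 2) : GridAlgebra ι where
  toFun x y := if x = y then g x else 0
  eq_zero_of_not_le' _ _ h := if_neg fun e => h e.le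

lemma diag_apply (g : (ι → ℤ) → ZMod 2) (x y : ι → ℤ) :
    diag g x y = if x = y then g x else 0 := rfl

lemma IsLabelling.meetsSlab_diag_add {n : ℤ} {g g' : ι → (ι → ℤ) → ZMod 2} (hg : IsLabelling n g)
    (hg' : IsLabelling n g') (j : ι) : MeetsSlab n j (diag (g j + g' j)) := fun u v h => by
  rw [diag_apply] at h
  obtain rfl : u = v := by
    by_contra hne
    exact h (if_neg hne)
  rw [if_pos rfl, Pi.add_apply] at h
  constructor <;> by_contra! hlt
  · rw [(hg j u).2 (by lia), (hg' j u).2 (by lia)] at h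
    exact h (CharTwo.add_self_eq_zero _)
  · rw [(hg j u).1 (by lia), (hg' j u).1 (by lia)] at h
    exact h (CharTwo.add_self_eq_zero _)

variable [DecidableEq ι]

/-- The indicator of the pairs of consecutive grid points. -/
def step : GridAlgebra ι where
  toFun x y := ∑ a, if y = x + Pi.single a 1 then 1 else 0
  eq_zero_of_not_le' x y h := by
    refine sum_eq_zero fun a _ => if_neg ?_
    rintro rfl
    exact h (le_add_of_nonneg_right (Pi.single_nonneg.2 zero_le_one))

lemma step_apply (x y : ι → ℤ) :
    (step : GridAlgebra ι) x y = ∑ a, if y = x + Pi.single a 1 then 1 else 0 := rfl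

lemma step_mul_apply (Z : GridAlgebra ι) (x y : ι → ℤ) :
    (step * Z : GridAlgebra ι) x y = ∑ a, Z (x + Pi.single a 1) y := by
  simp only [mul_apply, step_apply, sum_mul]
  rw [sum_comm]
  refine sum_congr rfl fun a _ => ?_
  simp only [ite_mul, one_mul, zero_mul, sum_ite_eq']
  refine ite_eq_left_iff.2 fun h => ?_
  refine (apply_eq_zero_of_not_le (fun h' => h (mem_Icc.2 ⟨?_, h'⟩)) Z).symm
  exact le_add_of_nonneg_right (Pi.single_nonneg.2 zero_le_one)

lemma mul_step_apply (Z : GridAlgebra ι) (x y : ι → ℤ) :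
    (Z * step : GridAlgebra ι) x y = ∑ a, Z x (y - Pi.single a 1) := by
  simp only [mul_apply, step_apply, mul_sum]
  rw [sum_comm]
  refine sum_congr rfl fun a _ => ?_
  simp only [mul_ite, mul_one, mul_zero, ← sub_eq_iff_eq_add, sum_ite_eq]
  refine ite_eq_left_iff.2 fun h => ?_
  refine (apply_eq_zero_of_not_le (fun h' => h (mem_Icc.2 ⟨h', ?_⟩)) Z).symm
  exact sub_le_self _ (Pi.single_nonneg.2 zero_le_one)

/-- The inner derivation of the incidence algebra given by `step`. -/
noncomputable def d (Z : GridAlgebra ι) : GridAlgebra ι := step * Z + Z * step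

lemma d_add (X Y : GridAlgebra ι) : d (X + Y) = d X + d Y := by
  simp only [d, mul_add, add_mul]
  abel

lemma d_mul (X Y : GridAlgebra ι) : d (X * Y) = d X * Y + X * d Y := by
  have h := add_self (X * step * Y)
  simp only [d, mul_add, add_mul, ← mul_assoc]
  rw [add_assoc, ← add_assoc (X * step * Y), h, zero_add]

lemma d_d (Z : GridAlgebra ι) : d (d Z) = step * step * Z + Z * (step * step) := by
  have h := add_self (step * Z * step)
  simp only [d, mul_add, add_mul, ← mul_assoc]
  rw [add_assoc, ← add_assoc (step * Z * step), h, zero_add]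

lemma d_diag_apply (g : (ι → ℤ) → ZMod 2) (x y : ι → ℤ) :
    d (diag g) x y = ∑ a, if y = x + Pi.single a 1 then g x + g y else 0 := by
  rw [d, IncidenceAlgebra.add_apply, step_mul_apply, mul_step_apply, ← sum_add_distrib]
  refine sum_congr rfl fun a _ => ?_
  simp only [diag_apply, eq_sub_iff_add_eq]
  by_cases h : x + Pi.single a 1 = y
  · simp [h, add_comm]
  · simp [h, Ne.symm h]

lemma ne_of_d_diag_ne_zero {g : (ι → ℤ) → ZMod 2} {x y : ι → ℤ} (h : d (diag g) x y ≠ 0) :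
    g x ≠ g y := by
  intro e
  refine h ?_
  rw [d_diag_apply]
  refine sum_eq_zero fun a _ => ?_
  rw [e, CharTwo.add_self_eq_zero, ite_self]

lemma exists_of_mul_ne_zero {X Y : GridAlgebra ι} {x y : ι → ℤ} (h : (X * Y) x y ≠ 0) :
    ∃ u, x ≤ u ∧ u ≤ y ∧ X x u ≠ 0 ∧ Y u y ≠ 0 := by
  rw [mul_apply] at h
  obtain ⟨u, hu, hne⟩ := exists_ne_zero_of_sum_ne_zero h
  rw [mem_Icc] at hu
  exact ⟨u, hu.1, hu.2, left_ne_zero_of_mul hne, right_ne_zero_of_mul hne⟩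

lemma Negligible.mul_left {Y : GridAlgebra ι} (hY : Negligible Y) (X : GridAlgebra ι) :
    Negligible (X * Y) := fun x y h => by
  by_contra hne
  obtain ⟨u, hxu, -, -, hne⟩ := exists_of_mul_ne_zero hne
  exact hne (hY u y (h.trans (by gcongr)))

lemma Negligible.mul_right {X : GridAlgebra ι} (hX : Negligible X) (Y : GridAlgebra ι) :
    Negligible (X * Y) := fun x y h => by
  by_contra hne
  obtain ⟨u, -, huy, hne, -⟩ := exists_of_mul_ne_zero hne
  exact hne (hX x u (huy.trans h))

lemma negligible_step_mul_step : Negligible (step * step : GridAlgebra ι) := fun x y h => by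
  simp only [step_mul_apply, step_apply]
  refine (Fintype.sum_prod_type' _).symm.trans ?_
  refine sum_involution (fun p _ => p.swap) ?_ ?_ (fun _ _ => mem_univ _) (fun p _ => p.swap_swap)
  · rintro ⟨a, b⟩ -
    simp only [Prod.swap_prod_mk, add_right_comm x (Pi.single b 1)]
    exact CharTwo.add_self_eq_zero _
  · rintro ⟨a, b⟩ - hne heq
    obtain rfl : b = a := congrArg Prod.fst heq
    have hy : y = x + Pi.single b 1 + Pi.single b 1 := by
      by_contra hy
      exact hne (if_neg hy)
    have := h b
    simp [hy] at this

lemma negligible_d_d (Z : GridAlgebra ι) : Negligible (d (d Z)) := by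
  rw [d_d]
  exact (negligible_step_mul_step.mul_right Z).add (negligible_step_mul_step.mul_left Z)

lemma negligible_d_prod {l : List (GridAlgebra ι)} (h : ∀ Z ∈ l, Negligible (d Z)) :
    Negligible (d l.prod) := by
  induction l with
  | nil =>
    rw [List.prod_nil, d, mul_one, one_mul, add_self]
    exact fun _ _ _ => rfl
  | cons Z l ih =>
    rw [List.prod_cons, d_mul]
    exact ((h Z (by simp)).mul_right _).add ((ih fun W hW => h W (by simp [hW])).mul_left _)

lemma MeetsSlab.mul_left {n : ℤ} {j : ι} {Y : GridAlgebra ι} (hY : MeetsSlab n j Y)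
    (X : GridAlgebra ι) : MeetsSlab n j (X * Y) := fun u v h => by
  obtain ⟨w, huw, -, -, hne⟩ := exists_of_mul_ne_zero h
  exact ⟨(huw j).trans (hY _ _ hne).1, (hY _ _ hne).2⟩

lemma MeetsSlab.mul_right {n : ℤ} {j : ι} {X : GridAlgebra ι} (hX : MeetsSlab n j X)
    (Y : GridAlgebra ι) : MeetsSlab n j (X * Y) := fun u v h => by
  obtain ⟨w, -, hwv, hne, -⟩ := exists_of_mul_ne_zero h
  exact ⟨(hX _ _ hne).1, (hX _ _ hne).2.trans (hwv j)⟩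

lemma MeetsSlab.prod {n : ℤ} {j : ι} {l : List (GridAlgebra ι)} {Z : GridAlgebra ι} (hZ : Z ∈ l)
    (h : MeetsSlab n j Z) : MeetsSlab n j l.prod := by
  obtain ⟨s, t, rfl⟩ := List.append_of_mem hZ
  rw [List.prod_append, List.prod_cons]
  exact (h.mul_right _).mul_left _

lemma finite_support_of_meetsSlab {n : ℤ} {Z : GridAlgebra ι} (hZ : ∀ j, MeetsSlab n j Z)
    {p q : (ι → ℤ) → ι → ℤ} (hp : ∀ x, x ≤ p x) (hq : ∀ x, q x ≤ x + 1) :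
    (Function.support fun x => Z (p x) (q x)).Finite := by
  refine (Set.finite_Icc (fun _ => (-1 : ℤ)) fun _ => n).subset fun x hx => ?_
  refine ⟨fun j => ?_, fun j => (hp x j).trans (hZ j _ _ hx).1⟩
  have h₁ := (hZ j _ _ hx).2
  have h₂ := hq x j
  simp only [Pi.add_apply, Pi.one_apply] at h₂
  lia

/-- The sum of the entries at all unit cubes. -/
noncomputable def cubeSum (Z : GridAlgebra ι) : ZMod 2 := ∑ᶠ x, Z x (x + 1)

lemma cubeSum_add {n : ℤ} {X Y : GridAlgebra ι} (hX : ∀ j, MeetsSlab n j X)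
    (hY : ∀ j, MeetsSlab n j Y) : cubeSum (X + Y) = cubeSum X + cubeSum Y :=
  finsum_add_distrib
    (finite_support_of_meetsSlab hX (fun _ => le_rfl) fun _ => le_rfl)
    (finite_support_of_meetsSlab hY (fun _ => le_rfl) fun _ => le_rfl)

lemma cubeSum_d {n : ℤ} {Z : GridAlgebra ι} (hZ : ∀ j, MeetsSlab n j Z) : cubeSum (d Z) = 0 := by
  have he (a : ι) : (0 : ι → ℤ) ≤ Pi.single a 1 := Pi.single_nonneg.2 zero_le_one
  have hl (a : ι) := finite_support_of_meetsSlab hZ (p := fun x => x + Pi.single a 1)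
    (q := fun x => x + 1) (fun x => le_add_of_nonneg_right (he a)) fun _ => le_rfl
  have hr (a : ι) := finite_support_of_meetsSlab hZ (p := fun x => x)
    (q := fun x => x + 1 - Pi.single a 1) (fun x => le_rfl) fun x => sub_le_self _ (he a)
  have key (a : ι) : ∑ᶠ x, (Z (x + Pi.single a 1) (x + 1) + Z x (x + 1 - Pi.single a 1)) = 0 := by
    have hshift := finsum_comp_equiv (Equiv.addRight (Pi.single a (1 : ℤ)))
      (f := fun x => Z x (x + 1 - Pi.single a 1))
    simp only [Equiv.coe_addRight, add_right_comm _ (Pi.single a 1) (1 : ι → ℤ),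
      add_sub_cancel_right] at hshift
    rw [finsum_add_distrib (hl a) (hr a), ← hshift]
    exact CharTwo.add_self_eq_zero _
  simp only [cubeSum, d, IncidenceAlgebra.add_apply, step_mul_apply, mul_step_apply,
    ← sum_add_distrib]
  rw [finsum_sum_comm]
  · exact sum_eq_zero fun a _ => key a
  · exact fun a _ => ((hl a).union (hr a)).subset (Function.support_add _ _)

lemma IsLabelling.meetsSlab {n : ℤ} {g : ι → (ι → ℤ) → ZMod 2} (hg : IsLabelling n g) (j : ι) :
    MeetsSlab n j (d (diag (g j))) := fun u v h => by
  have huv := le_of_ne_zero h j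
  have hne := ne_of_d_diag_ne_zero h
  constructor <;> by_contra! hlt
  · exact hne (((hg j u).2 (by lia)).trans ((hg j v).2 (by lia)).symm)
  · exact hne (((hg j u).1 (by lia)).trans ((hg j v).1 (by lia)).symm)

lemma negligible_d_prod_map (g : ι → (ι → ℤ) → ZMod 2) (l : List ι) :
    Negligible (d (l.map fun j => d (diag (g j))).prod) := by
  refine negligible_d_prod fun Z hZ => ?_
  obtain ⟨j, -, rfl⟩ := List.mem_map.1 hZ
  exact negligible_d_d _

lemma cubeSum_prod_replace {n : ℤ} {g g' : ι → (ι → ℤ) → ZMod 2} (hg : IsLabelling n g)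
    (hg' : IsLabelling n g') (s t : List ι) (i : ι) (hst : ∀ j, j ∈ s ++ i :: t) :
    cubeSum ((s.map fun j => d (diag (g' j))).prod *
        (d (diag (g i)) * (t.map fun j => d (diag (g j))).prod)) =
      cubeSum ((s.map fun j => d (diag (g' j))).prod *
        (d (diag (g' i)) * (t.map fun j => d (diag (g j))).prod)) := by
  set A := (s.map fun j => d (diag (g' j))).prod
  set B := (t.map fun j => d (diag (g j))).prod
  have slab {X : GridAlgebra ι} (hX : MeetsSlab n i X) (j : ι) : MeetsSlab n j (A * (X * B)) := by
    rcases List.mem_append.1 (hst j) with hj | hj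
    · exact MeetsSlab.mul_right (.prod (List.mem_map_of_mem hj) (hg'.meetsSlab j)) _
    rcases List.mem_cons.1 hj with rfl | hj
    · exact (hX.mul_right _).mul_left _
    · exact MeetsSlab.mul_left
        (MeetsSlab.mul_left (.prod (List.mem_map_of_mem hj) (hg.meetsSlab j)) _) _
  have hadd : d (diag (g i)) + d (diag (g' i)) = d (diag (g i + g' i)) := by
    rw [← d_add]
    congr 1
    ext x y _
    simp only [IncidenceAlgebra.add_apply, diag_apply, Pi.add_apply]
    split_ifs <;> simp
  have hsum : cubeSum (A * (d (diag (g i)) * B)) + cubeSum (A * (d (diag (g' i)) * B)) = 0 := by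
    rw [← cubeSum_add (slab (hg.meetsSlab i)) (slab (hg'.meetsSlab i)), ← mul_add, ← add_mul, hadd,
      ← cubeSum_d (slab (hg.meetsSlab_diag_add hg' i))]
    refine finsum_congr fun x => ?_
    rw [d_mul, d_mul, mul_add, IncidenceAlgebra.add_apply, IncidenceAlgebra.add_apply,
      (negligible_d_prod_map g' s).mul_right _ x _ le_rfl,
      (((negligible_d_prod_map g t).mul_left _).mul_left _) x _ le_rfl, zero_add, add_zero]
  exact CharTwo.add_eq_zero.1 hsum

lemma cubeSum_prod_congr {n : ℤ} {g g' : ι → (ι → ℤ) → ZMod 2} (hg : IsLabelling n g)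
    (hg' : IsLabelling n g') (s t : List ι) (hst : ∀ j, j ∈ s ++ t) :
    cubeSum ((s.map fun j => d (diag (g' j))).prod * (t.map fun j => d (diag (g j))).prod) =
      cubeSum ((s ++ t).map fun j => d (diag (g' j))).prod := by
  induction t generalizing s with
  | nil => simp
  | cons i t ih =>
    rw [List.map_cons, List.prod_cons, cubeSum_prod_replace hg hg' s t i hst, ← mul_assoc]
    simpa [mul_assoc] using ih (s ++ [i]) (by simpa using hst)

lemma d_diag_halfSpace_apply (j : ι) (x y : ι → ℤ) :
    d (diag (halfSpace j)) x y = if y = x + Pi.single j 1 ∧ x j = 0 then 1 else 0 := by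
  rw [d_diag_apply, sum_eq_single j]
  · by_cases hy : y = x + Pi.single j 1
    · subst hy
      simp only [halfSpace, Pi.add_apply, Pi.single_eq_same, true_and, if_true]
      rcases lt_trichotomy (x j) 0 with h | h | h
      · simp [show ¬ 1 ≤ x j by lia, show ¬ 1 ≤ x j + 1 by lia, h.ne]
      · simp [h]
      · simp [show 1 ≤ x j by lia, show 1 ≤ x j + 1 by lia, h.ne', CharTwo.add_self_eq_zero]
    · simp [hy]
  · intro a _ ha
    refine ite_eq_right_iff.2 ?_
    rintro rfl
    simp [halfSpace, Pi.single_eq_of_ne ha.symm, CharTwo.add_self_eq_zero]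
  · simp

lemma prod_d_diag_halfSpace_apply {l : List ι} (hl : l.Nodup) (x y : ι → ℤ) :
    (l.map fun j => d (diag (halfSpace j))).prod x y =
      if y = x + (l.map fun j => Pi.single j 1).sum ∧ ∀ j ∈ l, x j = 0 then 1 else 0 := by
  induction l generalizing x with
  | nil => simp [eq_comm]
  | cons i l ih =>
    obtain ⟨hi, hl⟩ := List.nodup_cons.1 hl
    have hx : (∀ j ∈ l, (x + Pi.single i 1 : ι → ℤ) j = 0) ↔ ∀ j ∈ l, x j = 0 := by
      refine forall₂_congr fun j hj => ?_
      rw [Pi.add_apply, Pi.single_eq_of_ne (by rintro rfl; exact hi hj), add_zero]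
    rw [List.map_cons, List.prod_cons, mul_apply, sum_eq_single (x + Pi.single i 1)]
    · rw [ih hl, d_diag_halfSpace_apply, List.map_cons, List.sum_cons, add_assoc]
      simp only [hx, true_and, List.forall_mem_cons, ← ite_and, ite_mul, one_mul, zero_mul]
      exact if_congr and_left_comm rfl rfl
    · intro u _ hu
      rw [d_diag_halfSpace_apply, if_neg (fun h => hu h.1), zero_mul]
    · intro h
      rw [mem_Icc, not_and] at h
      rw [apply_eq_zero_of_not_le
        (h (le_add_of_nonneg_right (Pi.single_nonneg.2 zero_le_one))), mul_zero]

lemma cubeSum_halfSpace : cubeSum ((univ : Finset ι).toList.map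
    fun j => d (diag (halfSpace j))).prod = 1 := by
  have hone : ((univ : Finset ι).toList.map fun j => (Pi.single j 1 : ι → ℤ)).sum = 1 := by
    rw [sum_map_toList]
    exact univ_sum_single (1 : ι → ℤ)
  rw [cubeSum, finsum_eq_single _ 0]
  · rw [prod_d_diag_halfSpace_apply (nodup_toList _), hone]
    simp
  · intro x hx
    rw [prod_d_diag_halfSpace_apply (nodup_toList _), if_neg]
    exact fun h => hx (funext fun j => h.2 j (by simp))

lemma exists_of_prod_ne_zero {g : ι → (ι → ℤ) → ZMod 2} {l : List ι} {x y : ι → ℤ}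
    (h : (l.map fun j => d (diag (g j))).prod x y ≠ 0) {j : ι} (hj : j ∈ l) :
    ∃ u v, x ≤ u ∧ u ≤ v ∧ v ≤ y ∧ g j u ≠ g j v := by
  induction l generalizing x with
  | nil => simp at hj
  | cons i l ih =>
    rw [List.map_cons, List.prod_cons] at h
    obtain ⟨w, hxw, hwy, h₁, h₂⟩ := exists_of_mul_ne_zero h
    rcases List.mem_cons.1 hj with rfl | hj
    · exact ⟨x, w, le_rfl, hxw, hwy, ne_of_d_diag_ne_zero h₁⟩
    · obtain ⟨u, v, hwu, huv, hvy, hne⟩ := ih h₂ hj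
      exact ⟨u, v, hxw.trans hwu, huv, hvy, hne⟩

/-- **Kuhn's cubical lemma**: some unit cube of the grid meets both labels in every direction. -/
theorem IsLabelling.exists_cube {n : ℤ} (hn : 1 ≤ n) {g : ι → (ι → ℤ) → ZMod 2}
    (hg : IsLabelling n g) :
    ∃ x : ι → ℤ, ∀ j, ∃ u v, x ≤ u ∧ u ≤ v ∧ v ≤ x + 1 ∧ g j u ≠ g j v := by
  have h : cubeSum ((univ : Finset ι).toList.map fun j => d (diag (g j))).prod = 1 := by
    simpa [cubeSum_halfSpace] using
      cubeSum_prod_congr hg (isLabelling_halfSpace hn) [] univ.toList (by simp)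
  obtain ⟨x, hx⟩ : ∃ x : ι → ℤ,
      ((univ : Finset ι).toList.map fun j => d (diag (g j))).prod x (x + 1) ≠ 0 := by
    by_contra! h0
    rw [cubeSum, finsum_congr h0, finsum_zero] at h
    exact zero_ne_one h
  exact ⟨x, fun j => exists_of_prod_ne_zero hx (by simp)⟩

end GridAlgebra

end Grid

/-- The point of `[-1, 1]` nearest to the `k`-th node of the subdivision of `[-1, 1]` into `n`
equal intervals. -/
noncomputable def gridNode (n : ℕ) (k : ℤ) : ℝ := max (-1) (min 1 (-1 + 2 * k / n))

lemma gridNode_mem (n : ℕ) (k : ℤ) : gridNode n k ∈ Set.Icc (-1 : ℝ) 1 :=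
  ⟨le_max_left _ _, max_le (by norm_num) (min_le_left _ _)⟩

lemma gridNode_of_nonpos {n : ℕ} {k : ℤ} (hk : k ≤ 0) : gridNode n k = -1 := by
  have hk' : (k : ℝ) ≤ 0 := mod_cast hk
  have : 2 * (k : ℝ) / n ≤ 0 := div_nonpos_of_nonpos_of_nonneg (by linarith) n.cast_nonneg
  exact max_eq_left ((min_le_right _ _).trans (by linarith))

lemma gridNode_of_le {n : ℕ} (hn : 0 < n) {k : ℤ} (hk : (n : ℤ) ≤ k) : gridNode n k = 1 := by
  have hk' : (n : ℝ) ≤ k := mod_cast hk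
  have hn' : (0 : ℝ) < n := mod_cast hn
  have : 2 ≤ 2 * (k : ℝ) / n := by
    rw [le_div_iff₀ hn']
    linarith
  rw [gridNode, min_eq_left (by linarith), max_eq_right (by norm_num)]

lemma dist_gridNode_le {n : ℕ} {k m : ℤ} (h₁ : k ≤ m) (h₂ : m ≤ k + 1) :
    dist (gridNode n m) (gridNode n k) ≤ 2 / n := by
  have h₁' : (k : ℝ) ≤ m := mod_cast h₁
  have h₂' : (m : ℝ) ≤ k + 1 := mod_cast h₂
  calc dist (gridNode n m) (gridNode n k)
      ≤ |(-1 + 2 * (m : ℝ) / n) - (-1 + 2 * k / n)| := by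
        rw [Real.dist_eq, gridNode, gridNode]
        refine (abs_max_sub_max_le_max _ _ _ _).trans ?_
        rw [sub_self, abs_zero, max_eq_right (abs_nonneg _)]
        refine (abs_min_sub_min_le_max _ _ _ _).trans ?_
        rw [sub_self, abs_zero, max_eq_right (abs_nonneg _)]
    _ = |(m - k : ℝ) * (2 / n)| := by ring_nf
    _ = |(m - k : ℝ)| * (2 / n) := by rw [abs_mul, abs_of_nonneg (by positivity : (0 : ℝ) ≤ 2 / n)]
    _ ≤ 2 / n := by
        refine mul_le_of_le_one_left (by positivity) ?_
        rw [abs_le]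
        constructor <;> linarith

open GridAlgebra in
/-- Under the boundary conditions of the Poincaré–Miranda theorem, there are points of the cube
at which all the functions are arbitrarily small. -/
lemma exists_forall_abs_lt {ι : Type*} [Fintype ι] (f : ι → (ι → ℝ) → ℝ)
    (hc : ∀ i, ContinuousOn (f i) (Set.Icc (fun _ => (-1 : ℝ)) (fun _ => 1)))
    (hneg : ∀ i x, x ∈ Set.Icc (fun _ => (-1 : ℝ)) (fun _ => 1) → x i = -1 → f i x ≤ 0)
    (hpos : ∀ i x, x ∈ Set.Icc (fun _ => (-1 : ℝ)) (fun _ => 1) → x i = 1 → 0 < f i x)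
    {ε : ℝ} (hε : 0 < ε) :
    ∃ x ∈ Set.Icc (fun _ : ι => (-1 : ℝ)) (fun _ => 1), ∀ i, |f i x| < ε := by
  classical
  have huc : UniformContinuousOn (fun x i => f i x) (Set.Icc (fun _ : ι => (-1 : ℝ)) fun _ => 1) :=
    isCompact_Icc.uniformContinuousOn_of_continuous (continuousOn_pi.2 hc)
  obtain ⟨δ, hδ, hfδ⟩ := Metric.uniformContinuousOn_iff.1 huc ε hε
  obtain ⟨n, hn⟩ := exists_nat_gt (2 / δ)
  have hn0 : (0 : ℝ) < n := (by positivity : 0 < 2 / δ).trans hn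
  have hnδ : 2 / (n : ℝ) < δ := (div_lt_comm₀ hδ hn0).1 hn
  let p (x : ι → ℤ) (i : ι) : ℝ := gridNode n (x i)
  have hp (x : ι → ℤ) : p x ∈ Set.Icc (fun _ : ι => (-1 : ℝ)) (fun _ => 1) :=
    ⟨fun i => (gridNode_mem n (x i)).1, fun i => (gridNode_mem n (x i)).2⟩
  have hg : IsLabelling n fun i x => if 0 < f i (p x) then (1 : ZMod 2) else 0 := fun i x =>
    ⟨fun h => if_neg (hneg i _ (hp x) (gridNode_of_nonpos h)).not_gt,
      fun h => if_pos (hpos i _ (hp x) (gridNode_of_le (mod_cast hn0) h))⟩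
  obtain ⟨x, hx⟩ := hg.exists_cube (by exact_mod_cast hn0)
  refine ⟨p x, hp x, fun i => ?_⟩
  have near {w : ι → ℤ} (h₁ : x ≤ w) (h₂ : w ≤ x + 1) : |f i (p w) - f i (p x)| < ε := by
    refine (dist_le_pi_dist (fun i => f i (p w)) (fun i => f i (p x)) i).trans_lt
      (hfδ _ (hp w) _ (hp x) (((dist_pi_le_iff (by positivity)).2 fun j => ?_).trans_lt hnδ))
    exact dist_gridNode_le (h₁ j) (h₂ j)
  obtain ⟨u, v, hxu, huv, hvx, hne⟩ := hx i
  have hu := abs_lt.1 (near hxu (huv.trans hvx))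
  have hv := abs_lt.1 (near (hxu.trans huv) hvx)
  rw [abs_lt]
  by_cases h₁ : 0 < f i (p u) <;> by_cases h₂ : 0 < f i (p v)
  · simp [h₁, h₂] at hne
  · constructor <;> linarith
  · constructor <;> linarith
  · simp [h₁, h₂] at hne

/-- Strict Poincaré–Miranda: if `f i < 0` on the face `x i = −1` and `f i > 0` on
the face `x i = 1`, then there is a common zero in the open cube `(−1,1)^d`. -/
theorem stmt15 {d : ℕ} (f : Fin d → ((Fin d → ℝ) → ℝ))
    (hc : ∀ i, ContinuousOn (f i) (Set.Icc (fun _ => (-1 : ℝ)) (fun _ => 1)))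
    (hneg : ∀ i x, x ∈ Set.Icc (fun _ => (-1 : ℝ)) (fun _ => 1) → x i = -1 → f i x < 0)
    (hpos : ∀ i x, x ∈ Set.Icc (fun _ => (-1 : ℝ)) (fun _ => 1) → x i = 1 → 0 < f i x) :
    ∃ x : Fin d → ℝ, (∀ i, x i ∈ Set.Ioo (-1 : ℝ) 1) ∧ ∀ i, f i x = 0 := by
  obtain ⟨z, hz, hmin⟩ := isCompact_Icc.exists_isMinOn
    (Set.nonempty_Icc.2 fun _ => by norm_num : (Set.Icc (fun _ : Fin d => (-1 : ℝ))
      fun _ => 1).Nonempty) (continuousOn_pi.2 hc).norm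
  have hzero : (fun i => f i z) = 0 := by
    by_contra hne
    obtain ⟨x, hx, hlt⟩ := exists_forall_abs_lt f hc (fun i x hx h => (hneg i x hx h).le) hpos
      (norm_pos_iff.2 hne)
    exact ((pi_norm_lt_iff (norm_pos_iff.2 hne)).2 hlt).not_ge (hmin hx)
  refine ⟨z, fun i => ⟨lt_of_le_of_ne (hz.1 i) fun h => ?_,
    lt_of_le_of_ne (hz.2 i) fun h => ?_⟩, congrFun hzero⟩
  · exact (hneg i z hz h.symm).ne (congrFun hzero i)
  · exact (hpos i z hz h).ne' (congrFun hzero i)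
end
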